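/- arXiv:1905.12184 — 7 statements merged into one kernel-verified Lean document; each statement's English description precedes it below -/
import Mathlib

section
/- Each of the matrices R₁, R₂, R₃ and J preserves the Hermitian form defined by H: for every M ∈ {R₁, R₂, R₃, J} one has Mᵀ·H·M̄ = H (equivalently, ⟨M·x, M·y⟩ = ⟨x, y⟩ for all x, y ∈ ℂ³). -/
/-!
A matrix `M` preserves the form when `Mᵀ * H * M̄ = H`, and such matrices are closed under products.
The permutation matrix `J` and its transpose (which is its inverse) preserve `H` because `H` is
circulant. Since `R₂ = J R₁ J⁻¹` and `R₃ = J R₂ J⁻¹`, only `R₁` remains, and there every entry of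
the matrix identity follows from `η η̄ = 1`, `φ φ̄ = 1` and `i α (η - η̄) = -1`; the last is
`η - η̄ = 2 i sin (π / p)`, where `sin (π / p) ≠ 0` because `p ≥ 3`.
-/

noncomputable section

open Matrix

/-- η = exp(iπ/p) -/
def eta (p : ℕ) : ℂ := Complex.exp (Real.pi * Complex.I / p)
/-- η̄ = exp(−iπ/p) -/
def etab (p : ℕ) : ℂ := Complex.exp (-(Real.pi * Complex.I / p))
/-- φ = exp(iπt/3) -/
def phi (t : ℝ) : ℂ := Complex.exp (Real.pi * Complex.I * t / 3)
/-- φ̄ = exp(−iπt/3) -/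
def phib (t : ℝ) : ℂ := Complex.exp (-(Real.pi * Complex.I * t / 3))
/-- α = 1/(2 sin(π/p)) -/
def alpha (p : ℕ) : ℂ := 1 / (2 * Real.sin (Real.pi / p))

def R1 (p : ℕ) (t : ℝ) : Matrix (Fin 3) (Fin 3) ℂ :=
  !![eta p ^ 2, -Complex.I * eta p * phib t, -Complex.I * eta p * phi t;
     0, 1, 0;
     0, 0, 1]

def R2 (p : ℕ) (t : ℝ) : Matrix (Fin 3) (Fin 3) ℂ :=
  !![1, 0, 0;
     -Complex.I * eta p * phi t, eta p ^ 2, -Complex.I * eta p * phib t;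
     0, 0, 1]

def R3 (p : ℕ) (t : ℝ) : Matrix (Fin 3) (Fin 3) ℂ :=
  !![1, 0, 0;
     0, 1, 0;
     -Complex.I * eta p * phib t, -Complex.I * eta p * phi t, eta p ^ 2]

def Jmat : Matrix (Fin 3) (Fin 3) ℂ :=
  !![0, 0, 1;
     1, 0, 0;
     0, 1, 0]

def Hmat (p : ℕ) (t : ℝ) : Matrix (Fin 3) (Fin 3) ℂ :=
  !![1, -alpha p * phi t, -alpha p * phib t;
     -alpha p * phib t, 1, -alpha p * phi t;
     -alpha p * phi t, -alpha p * phib t, 1]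

/-- The Hermitian form ⟨x,y⟩ = xᵀ·H·ȳ. -/
def form (p : ℕ) (t : ℝ) (x y : Fin 3 → ℂ) : ℂ :=
  dotProduct x ((Hmat p t).mulVec (fun i => starRingEnd ℂ (y i)))

lemma eta_mul_etab (p : ℕ) : eta p * etab p = 1 := by
  rw [eta, etab, ← Complex.exp_add, add_neg_cancel, Complex.exp_zero]

lemma phi_mul_phib (t : ℝ) : phi t * phib t = 1 := by
  rw [phi, phib, ← Complex.exp_add, add_neg_cancel, Complex.exp_zero]

lemma conj_eta (p : ℕ) : starRingEnd ℂ (eta p) = etab p := by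
  rw [eta, etab, ← Complex.exp_conj]
  congr 1
  simp [neg_div]

lemma conj_phi (t : ℝ) : starRingEnd ℂ (phi t) = phib t := by
  rw [phi, phib, ← Complex.exp_conj]
  congr 1
  have h3 : starRingEnd ℂ (3 : ℂ) = 3 := map_ofNat _ 3
  simp [neg_div, h3]

lemma conj_phib (t : ℝ) : starRingEnd ℂ (phib t) = phi t := by
  rw [← conj_phi, Complex.conj_conj]

/-- The normalisation of `α` that makes the `Rᵢ` unitary for `H`. -/
lemma alpha_mul_eta_sub_etab (p : ℕ) (hp : 3 ≤ p) :
    Complex.I * alpha p * (eta p - etab p) = -1 := by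
  have hp' : (3 : ℝ) ≤ p := by exact_mod_cast hp
  have hs : Real.sin (Real.pi / p) ≠ 0 := by
    refine (Real.sin_pos_of_pos_of_lt_pi (by positivity) ?_).ne'
    exact div_lt_self Real.pi_pos (by linarith)
  have hs' : (Real.sin (Real.pi / p) : ℂ) ≠ 0 := Complex.ofReal_ne_zero.mpr hs
  have he : eta p - etab p = 2 * Complex.I * Real.sin (Real.pi / p) := by
    have h1 : (Real.pi * Complex.I / p : ℂ) = ((Real.pi / p : ℝ) : ℂ) * Complex.I := by
      push_cast
      ring
    rw [eta, etab, h1, ← neg_mul, Complex.exp_mul_I, Complex.exp_mul_I, Complex.cos_neg,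
      Complex.sin_neg, Complex.ofReal_sin]
    ring
  rw [he, alpha]
  field_simp
  exact Complex.I_sq

/-- `M` is unitary for the sesquilinear form `xᵀ H ȳ`. -/
def Preserves (H M : Matrix (Fin 3) (Fin 3) ℂ) : Prop :=
  M.transpose * H * M.map (starRingEnd ℂ) = H

lemma Preserves.mul {H M N : Matrix (Fin 3) (Fin 3) ℂ} (hM : Preserves H M)
    (hN : Preserves H N) : Preserves H (M * N) := by
  unfold Preserves at *
  calc (M * N).transpose * H * (M * N).map (starRingEnd ℂ)
      = N.transpose * (M.transpose * H * M.map (starRingEnd ℂ)) * N.map (starRingEnd ℂ) := by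
        rw [Matrix.transpose_mul, Matrix.map_mul]
        simp only [Matrix.mul_assoc]
    _ = H := by rw [hM, hN]

lemma Preserves.form_eq {p : ℕ} {t : ℝ} {M : Matrix (Fin 3) (Fin 3) ℂ}
    (hM : Preserves (Hmat p t) M) (x y : Fin 3 → ℂ) :
    form p t (M.mulVec x) (M.mulVec y) = form p t x y := by
  have hy : (fun i => starRingEnd ℂ (M.mulVec y i)) =
      (M.map (starRingEnd ℂ)).mulVec (fun i => starRingEnd ℂ (y i)) := by
    ext i
    simp [Matrix.mulVec, dotProduct]
  unfold Preserves at hM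
  rw [form, form, hy, ← Matrix.vecMul_transpose, ← Matrix.dotProduct_mulVec,
    Matrix.mulVec_mulVec, Matrix.mulVec_mulVec, hM]

lemma preserves_Jmat (p : ℕ) (t : ℝ) : Preserves (Hmat p t) Jmat := by
  unfold Preserves
  ext i j
  fin_cases i <;> fin_cases j <;>
    simp [Jmat, Hmat, Matrix.mul_apply, Fin.sum_univ_three]

lemma preserves_Jmat_transpose (p : ℕ) (t : ℝ) : Preserves (Hmat p t) Jmat.transpose := by
  unfold Preserves
  ext i j
  fin_cases i <;> fin_cases j <;>
    simp [Jmat, Hmat, Matrix.mul_apply, Fin.sum_univ_three]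

lemma R2_eq_conj (p : ℕ) (t : ℝ) : R2 p t = Jmat * R1 p t * Jmat.transpose := by
  ext i j
  fin_cases i <;> fin_cases j <;>
    simp [Jmat, R1, R2, Matrix.mul_apply, Fin.sum_univ_three]

lemma R3_eq_conj (p : ℕ) (t : ℝ) : R3 p t = Jmat * R2 p t * Jmat.transpose := by
  ext i j
  fin_cases i <;> fin_cases j <;>
    simp [Jmat, R2, R3, Matrix.mul_apply, Fin.sum_univ_three]

lemma preserves_R1 (p : ℕ) (hp : 3 ≤ p) (t : ℝ) : Preserves (Hmat p t) (R1 p t) := by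
  have h1 := eta_mul_etab p
  have h2 := phi_mul_phib t
  have h3 := alpha_mul_eta_sub_etab p hp
  have h4 := Complex.I_mul_I
  unfold Preserves
  ext i j
  fin_cases i <;> fin_cases j <;>
    simp [R1, Hmat, Matrix.mul_apply, Fin.sum_univ_three, conj_eta, conj_phi, conj_phib] <;>
    grind

/-- Each of R₁, R₂, R₃, J preserves the Hermitian form defined by H:
`Mᵀ·H·M̄ = H`, equivalently `⟨M·x, M·y⟩ = ⟨x, y⟩` for all `x, y ∈ ℂ³`. -/
theorem matrices_preserve_hermitian_form (p : ℕ) (hp : 3 ≤ p) (t : ℝ) :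
    ∀ M ∈ ({R1 p t, R2 p t, R3 p t, Jmat} : Set (Matrix (Fin 3) (Fin 3) ℂ)),
      (M.transpose * Hmat p t * M.map (starRingEnd ℂ) = Hmat p t) ∧
      (∀ x y : Fin 3 → ℂ, form p t (M.mulVec x) (M.mulVec y) = form p t x y) := by
  have key : ∀ M ∈ ({R1 p t, R2 p t, R3 p t, Jmat} : Set (Matrix (Fin 3) (Fin 3) ℂ)),
      Preserves (Hmat p t) M := by
    have hJ := preserves_Jmat p t
    have hJt := preserves_Jmat_transpose p t
    have h1 := preserves_R1 p hp t
    have h2 : Preserves (Hmat p t) (R2 p t) := by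
      rw [R2_eq_conj]
      exact (hJ.mul h1).mul hJt
    have h3 : Preserves (Hmat p t) (R3 p t) := by
      rw [R3_eq_conj]
      exact (hJ.mul h2).mul hJt
    rintro M (rfl | rfl | rfl | rfl)
    exacts [h1, h2, h3, hJ]
  exact fun M hM => ⟨key M hM, (key M hM).form_eq⟩
end
end

section
/- The matrices R₁, R₂, R₃ satisfy the braid relations: for all i ≠ j in {1, 2, 3}, Rᵢ·Rⱼ·Rᵢ = Rⱼ·Rᵢ·Rⱼ. -/
/-!
Each generator is a complex reflection `Rᵢ = 1 + eᵢ ℓᵢ`, where `eᵢ` is a standard basis vector and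
`ℓᵢ` is a row vector. Put `A = eᵢ ℓᵢ` and `B = eⱼ ℓⱼ`. Then `A² = (η² - 1) A` because
`ℓᵢ(eᵢ) = η² - 1`, and `A B A = -η² A` because `ℓᵢ(eⱼ) ℓⱼ(eᵢ) = (-iη)² φ φ̄ = -η²`. Hence
`A + A² + A B A = 0`, and symmetrically for `B`. Expanding the products, the two sides of the braid
relation differ by exactly `(A + A² + A B A) - (B + B² + B A B)`.
-/

noncomputable section

open Matrix

lemma braid_of_add_sq_add {S : Type*} [Ring S] {A B : S}
    (hA : A + A * A + A * B * A = 0) (hB : B + B * B + B * A * B = 0) :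
    (1 + A) * (1 + B) * (1 + A) = (1 + B) * (1 + A) * (1 + B) := by
  have h₁ : (1 + A) * (1 + B) * (1 + A) =
      1 + A + B + A * B + B * A + (A + A * A + A * B * A) := by noncomm_ring
  have h₂ : (1 + B) * (1 + A) * (1 + B) =
      1 + A + B + A * B + B * A + (B + B * B + B * A * B) := by noncomm_ring
  rw [h₁, h₂, hA, hB]

/-- For `A = v u` and `B = x w`, the normalizations `u(v) = q - 1` and `u(x) w(v) = -q` give
`A² = (q - 1) A` and `A B A = -q A`, so `A + A² + A B A = 0`. -/
lemma rank_one_add_sq_add {v u x w : Fin 3 → ℂ} {q : ℂ}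
    (hq : u ⬝ᵥ v = q - 1) (hc : (u ⬝ᵥ x) * (w ⬝ᵥ v) = -q) :
    vecMulVec v u + vecMulVec v u * vecMulVec v u +
      vecMulVec v u * vecMulVec x w * vecMulVec v u = 0 := by
  have h : ∀ a b c d : Fin 3 → ℂ,
      vecMulVec a b * vecMulVec c d = (b ⬝ᵥ c) • vecMulVec a d := by
    intro a b c d
    rw [vecMulVec_mul_vecMulVec, vecMulVec_smul]
  rw [h, h, Matrix.smul_mul, h, smul_smul, hq, hc]
  module

/-- The braid relation for two complex reflections `1 + v u` and `1 + x w` of the same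
multiplier `q` whose row vectors satisfy `u(x) w(v) = -q`. -/
lemma braid_reflections {v u x w : Fin 3 → ℂ} {q : ℂ}
    (hu : u ⬝ᵥ v = q - 1) (hw : w ⬝ᵥ x = q - 1) (hc : (u ⬝ᵥ x) * (w ⬝ᵥ v) = -q) :
    (1 + vecMulVec v u) * (1 + vecMulVec x w) * (1 + vecMulVec v u) =
      (1 + vecMulVec x w) * (1 + vecMulVec v u) * (1 + vecMulVec x w) :=
  braid_of_add_sq_add (rank_one_add_sq_add hu hc)
    (rank_one_add_sq_add hw (by rw [mul_comm, hc]))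

/-- The row vector `ℓᵢ` with `Rᵢ = 1 + eᵢ ℓᵢ`. -/
def reflRow (p : ℕ) (t : ℝ) : Fin 3 → Fin 3 → ℂ :=
  ![![eta p ^ 2 - 1, -Complex.I * eta p * phib t, -Complex.I * eta p * phi t],
    ![-Complex.I * eta p * phi t, eta p ^ 2 - 1, -Complex.I * eta p * phib t],
    ![-Complex.I * eta p * phib t, -Complex.I * eta p * phi t, eta p ^ 2 - 1]]

lemma R_eq_one_add (p : ℕ) (t : ℝ) (i : Fin 3) :
    ![R1 p t, R2 p t, R3 p t] i = 1 + vecMulVec (Pi.single i 1) (reflRow p t i) := by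
  fin_cases i <;> ext a b <;> fin_cases a <;> fin_cases b <;>
    simp [R1, R2, R3, reflRow]

lemma reflRow_diag (p : ℕ) (t : ℝ) (i : Fin 3) : reflRow p t i i = eta p ^ 2 - 1 := by
  fin_cases i <;> simp [reflRow]

lemma reflRow_mul_reflRow (p : ℕ) (t : ℝ) {i j : Fin 3} (hij : i ≠ j) :
    reflRow p t i j * reflRow p t j i = -eta p ^ 2 := by
  have h : (-Complex.I * eta p * phi t) * (-Complex.I * eta p * phib t) = -eta p ^ 2 := by
    linear_combination (Complex.I ^ 2 * eta p ^ 2) * phi_mul_phib t + eta p ^ 2 * Complex.I_sq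
  have h' := (mul_comm _ _).trans h
  fin_cases i <;> fin_cases j <;> first | exact absurd rfl hij | exact h | exact h'

/-- The braid relations: for all i ≠ j in {1,2,3}, Rᵢ·Rⱼ·Rᵢ = Rⱼ·Rᵢ·Rⱼ. -/
theorem braid_relations (p : ℕ) (hp : 3 ≤ p) (t : ℝ) :
    ∀ i j : Fin 3, i ≠ j →
      ![R1 p t, R2 p t, R3 p t] i * ![R1 p t, R2 p t, R3 p t] j * ![R1 p t, R2 p t, R3 p t] i =
      ![R1 p t, R2 p t, R3 p t] j * ![R1 p t, R2 p t, R3 p t] i * ![R1 p t, R2 p t, R3 p t] j := by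
  intro i j hij
  rw [R_eq_one_add, R_eq_one_add]
  apply braid_reflections (q := eta p ^ 2)
  · rw [dotProduct_single_one, reflRow_diag]
  · rw [dotProduct_single_one, reflRow_diag]
  · rw [dotProduct_single_one, dotProduct_single_one, reflRow_mul_reflRow p t hij]
end
end

section
/- For every permutation (i,j,k) of (1,2,3), the vector v_{ijk} is orthogonal to v_{jik} and to v_{ikj} with respect to the Hermitian form: explicitly, ⟨v₁₂₃, v₂₁₃⟩ = ⟨v₂₃₁, v₃₂₁⟩ = ⟨v₃₁₂, v₁₃₂⟩ = 0 and ⟨v₁₂₃, v₁₃₂⟩ = ⟨v₂₃₁, v₂₁₃⟩ = ⟨v₃₁₂, v₃₂₁⟩ = 0. -/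
/-!
Since `ηη̄ = 1`, `φφ̄ = 1` and `2 sin(π/p) = i(η̄ - η)`, the constant `α` satisfies
`iα(η̄ - η) = 1`; here `p ≥ 3` (indeed `p ≥ 2`) ensures `sin(π/p) ≠ 0`. The entries of all the
vectors and of `H` are polynomials in `i, η, η̄, φ, φ̄, α`, and complex conjugation swaps
`η` with `η̄` and `φ` with `φ̄`. Each of the six products therefore becomes a polynomial lying in
the ideal generated by `ηη̄ - 1`, `φφ̄ - 1`, `iα(η̄ - η) - 1` and `i² + 1`.
-/

noncomputable section

open Matrix

def v123 (p : ℕ) (t : ℝ) : Fin 3 → ℂ :=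
  ![-Complex.I * eta p * phib t, 1, Complex.I * etab p * phi t]
def v231 (p : ℕ) (t : ℝ) : Fin 3 → ℂ :=
  ![Complex.I * etab p * phi t, -Complex.I * eta p * phib t, 1]
def v312 (p : ℕ) (t : ℝ) : Fin 3 → ℂ :=
  ![1, Complex.I * etab p * phi t, -Complex.I * eta p * phib t]
def v321 (p : ℕ) (t : ℝ) : Fin 3 → ℂ :=
  ![Complex.I * etab p * phib t, 1, -Complex.I * eta p * phi t]
def v132 (p : ℕ) (t : ℝ) : Fin 3 → ℂ :=
  ![-Complex.I * eta p * phi t, Complex.I * etab p * phib t, 1]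
def v213 (p : ℕ) (t : ℝ) : Fin 3 → ℂ :=
  ![1, -Complex.I * eta p * phi t, Complex.I * etab p * phib t]

lemma conj_etab (p : ℕ) : starRingEnd ℂ (etab p) = eta p := by
  rw [← conj_eta, Complex.conj_conj]

/-- Euler's formula `2 sin(π/p) = i(η̄ - η)`, rewritten in terms of `α = 1/(2 sin(π/p))`. -/
lemma I_mul_alpha_mul (p : ℕ) (hp : 3 ≤ p) :
    Complex.I * alpha p * (etab p - eta p) = 1 := by
  have hp' : (3 : ℝ) ≤ p := by exact_mod_cast hp
  have hpos : 0 < Real.sin (Real.pi / p) := by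
    apply Real.sin_pos_of_pos_of_lt_pi
    · have := Real.pi_pos
      positivity
    · exact div_lt_self Real.pi_pos (by linarith)
  have hne : (2 * Real.sin (Real.pi / p) : ℂ) ≠ 0 := by
    exact_mod_cast (mul_pos two_pos hpos).ne'
  have hs : (2 * Real.sin (Real.pi / p) : ℂ) = Complex.I * (etab p - eta p) := by
    rw [Complex.ofReal_sin, Complex.two_sin, eta, etab, mul_comm]
    push_cast
    ring_nf
  rw [mul_right_comm, ← hs, alpha, mul_one_div_cancel hne]

/-- v_{ijk} ⟂ v_{jik} and v_{ijk} ⟂ v_{ikj} for the Hermitian form. -/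
theorem v_orthogonality (p : ℕ) (hp : 3 ≤ p) (t : ℝ) :
    form p t (v123 p t) (v213 p t) = 0 ∧
    form p t (v231 p t) (v321 p t) = 0 ∧
    form p t (v312 p t) (v132 p t) = 0 ∧
    form p t (v123 p t) (v132 p t) = 0 ∧
    form p t (v231 p t) (v213 p t) = 0 ∧
    form p t (v312 p t) (v321 p t) = 0 := by
  have he := eta_mul_etab p
  have hf := phi_mul_phib t
  have ha := I_mul_alpha_mul p hp
  have hI := Complex.I_mul_I
  simp only [form, v123, v231, v312, v321, v132, v213, Hmat, dotProduct, mulVec,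
    Fin.sum_univ_three, Matrix.of_apply, Matrix.cons_val, map_mul, map_neg, map_one,
    Complex.conj_I, conj_eta, conj_etab, conj_phi, conj_phib]
  -- From here on only the polynomial relations between the constants matter.
  generalize eta p = e at *
  generalize etab p = e' at *
  generalize phi t = f at *
  generalize phib t = f' at *
  generalize alpha p = a at *
  generalize Complex.I = i at *
  refine ⟨?_, ?_, ?_, ?_, ?_, ?_⟩ <;> grind
end
end

section
/- For every permutation (i,j,k) of (1,2,3), the standard basis vector eᵢ is orthogonal to v_{jik} and to v_{kij} with respect to the Hermitian form: explicitly, ⟨e₁, v₂₁₃⟩ = ⟨e₁, v₃₁₂⟩ = ⟨e₂, v₁₂₃⟩ = ⟨e₂, v₃₂₁⟩ = ⟨e₃, v₂₃₁⟩ = ⟨e₃, v₁₃₂⟩ = 0. -/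
/-!
Each pairing is a single row of `H` applied to a conjugated vector. Since `φ φ̄ = 1` and the two
off-diagonal entries of the row cancel the powers of `φ` in the vector, every pairing reduces to
`1 + i α (η - η̄)`. As `η - η̄ = 2 i sin(π/p)` and `α = 1 / (2 sin(π/p))`, this is `1 - 1 = 0`.
The division is genuine because `0 < π/p < π` for `p ≥ 3` (`alpha_mul_eta_sub`).
-/

noncomputable section

open Matrix

lemma eta_sub_etab (p : ℕ) :
    eta p - etab p = 2 * Complex.I * (Real.sin (Real.pi / p) : ℝ) := by
  have h1 : eta p = Complex.exp ((Real.pi / p : ℂ) * Complex.I) := by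
    rw [eta]; congr 1; ring
  have h2 : etab p = Complex.exp (-(Real.pi / p : ℂ) * Complex.I) := by
    rw [etab]; congr 1; ring
  have h := Complex.two_sin (Real.pi / p : ℂ)
  rw [← h1, ← h2] at h
  push_cast
  linear_combination (-Complex.I) * h + (eta p - etab p) * Complex.I_mul_I

/-- The scalar identity to which all six orthogonality relations reduce. -/
lemma alpha_mul_eta_sub (p : ℕ) (hp : 3 ≤ p) :
    1 + Complex.I * alpha p * (eta p - etab p) = 0 := by
  have hp' : (3 : ℝ) ≤ p := by exact_mod_cast hp
  have hs : Real.sin (Real.pi / p) ≠ 0 :=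
    (Real.sin_pos_of_pos_of_lt_pi (by positivity)
      (div_lt_self Real.pi_pos (by linarith))).ne'
  have hs' : ((Real.sin (Real.pi / p) : ℝ) : ℂ) ≠ 0 := by exact_mod_cast hs
  rw [eta_sub_etab, alpha]
  generalize ((Real.sin (Real.pi / p) : ℝ) : ℂ) = s at hs'
  field_simp
  simp

/-- eᵢ ⟂ v_{jik} and eᵢ ⟂ v_{kij} for the Hermitian form, where eᵢ is the
standard iᵗʰ basis vector of ℂ³. -/
theorem e_orthogonality (p : ℕ) (hp : 3 ≤ p) (t : ℝ) :
    form p t ![1, 0, 0] (v213 p t) = 0 ∧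
    form p t ![1, 0, 0] (v312 p t) = 0 ∧
    form p t ![0, 1, 0] (v123 p t) = 0 ∧
    form p t ![0, 1, 0] (v321 p t) = 0 ∧
    form p t ![0, 0, 1] (v231 p t) = 0 ∧
    form p t ![0, 0, 1] (v132 p t) = 0 := by
  have h := alpha_mul_eta_sub p hp
  have hφ := phi_mul_phib t
  refine ⟨?_, ?_, ?_, ?_, ?_, ?_⟩ <;>
  · simp [form, Hmat, v123, v231, v312, v321, v132, v213, dotProduct, mulVec, Fin.sum_univ_three,
      conj_eta, conj_etab, conj_phi, conj_phib]
    linear_combination h + Complex.I * alpha p * (eta p - etab p) * hφ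
end
end

section
/- The vector v₃₁₂ is an eigenvector of both R₁ and R₃·J: explicitly, R₁·v₃₁₂ = v₃₁₂ and (R₃·J)·v₃₁₂ = (−iηφ̄)·v₃₁₂. In particular, both R₁ and R₃·J stabilize the linear subspace {x ∈ ℂ³ : ⟨x, v₃₁₂⟩ = 0}. -/
/-!
Both eigenvector identities are polynomial consequences of `η η̄ = 1`, `φ φ̄ = 1` and `i² = -1`.

For the subspace, write `w = H v̄`, so that `⟨x, v⟩ = xᵀ w`. The relation `α (η - η̄) = i`, which
comes from `2i sin (π/p) = η - η̄`, gives `w₁ = 0` and `w₂ = iηφ w₃` (`form_v312`). From this,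
`⟨R₁ x, v⟩ = ⟨x, v⟩` and `⟨R₃ J x, v⟩ = -iηφ̄ ⟨x, v⟩`. An invertible matrix that scales `⟨·, v⟩` by a
nonzero constant maps its kernel onto itself (`image_ker_eq`), and both determinants are `η²`.
-/

noncomputable section

open Matrix

lemma alpha_mul_sub (p : ℕ) (hp : 3 ≤ p) : alpha p * (eta p - etab p) = Complex.I := by
  have hp' : (3 : ℝ) ≤ p := by exact_mod_cast hp
  have hpos : 0 < Real.sin (Real.pi / p) := by
    apply Real.sin_pos_of_pos_of_lt_pi
    · have := Real.pi_pos
      positivity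
    · exact div_lt_self Real.pi_pos (by linarith)
  have hs : (Real.sin (Real.pi / p) : ℂ) ≠ 0 := by exact_mod_cast hpos.ne'
  have key : eta p - etab p = 2 * Real.sin (Real.pi / p) * Complex.I := by
    have h1 : (Real.pi * Complex.I / p : ℂ) = (Real.pi / p : ℂ) * Complex.I := by ring
    rw [eta, etab, h1, ← neg_mul, Complex.exp_mul_I, Complex.exp_mul_I, Complex.cos_neg,
      Complex.sin_neg]
    push_cast
    ring
  rw [key, alpha]
  field_simp

/-- The functional `⟨·, v₃₁₂⟩` does not involve the first coordinate, and its other two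
coefficients are proportional with ratio `iηφ`. -/
lemma form_v312 (p : ℕ) (hp : 3 ≤ p) (t : ℝ) : ∃ w : ℂ, ∀ x : Fin 3 → ℂ,
    form p t x (v312 p t) = w * (Complex.I * eta p * phi t * x 1 + x 2) := by
  have hE := eta_mul_etab p
  have hP := phi_mul_phib t
  have hA := alpha_mul_sub p hp
  have hI := Complex.I_mul_I
  refine ⟨-alpha p * phi t + Complex.I * alpha p * eta p * phib t ^ 2
    + Complex.I * etab p * phi t, fun x => ?_⟩
  simp only [form, Hmat, v312, Matrix.mulVec, dotProduct, Fin.sum_univ_three]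
  simp [conj_eta, conj_etab, conj_phi, conj_phib]
  generalize eta p = E at *
  generalize etab p = F at *
  generalize phi t = P at *
  generalize phib t = Q at *
  generalize alpha p = A at *
  generalize Complex.I = i at *
  have h1 : 1 + A * P * (i * E * Q) - A * Q * (i * F * P) = 0 := by
    linear_combination (A * i * (E - F)) * hP + i * hA + hI
  have h2 : -A * Q - i * E * Q - A * P * (i * F * P)
      = i * E * P * (-A * P + i * A * E * Q ^ 2 + i * F * P) := by
    linear_combination (i * P ^ 2 + E * Q) * hA + A * Q * hE - i ^ 2 * P ^ 2 * hE
      - i ^ 2 * A * E ^ 2 * Q * hP - A * E ^ 2 * Q * hI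
  have h3 : -A * P + A * Q * (i * E * Q) + i * F * P
      = -A * P + i * A * E * Q ^ 2 + i * F * P := by ring
  linear_combination x 0 * h1 + x 1 * h2 + x 2 * h3

/-- An invertible matrix scaling a functional by a nonzero constant maps the zero set of that
functional onto itself. -/
lemma image_ker_eq (A : Matrix (Fin 3) (Fin 3) ℂ) (hA : A.det ≠ 0) (f : (Fin 3 → ℂ) → ℂ) (c : ℂ)
    (hc : c ≠ 0) (h : ∀ x, f (A.mulVec x) = c * f x) :
    (fun x => A.mulVec x) '' {x | f x = 0} = {x | f x = 0} := by
  ext y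
  constructor
  · rintro ⟨x, hx, rfl⟩
    simp only [Set.mem_ofPred_eq] at hx ⊢
    rw [h, hx, mul_zero]
  · intro hy
    have hAy : A.mulVec (A⁻¹.mulVec y) = y := by
      rw [Matrix.mulVec_mulVec, Matrix.mul_nonsing_inv A (isUnit_iff_ne_zero.mpr hA),
        Matrix.one_mulVec]
    refine ⟨A⁻¹.mulVec y, ?_, hAy⟩
    have h' := h (A⁻¹.mulVec y)
    rw [hAy, Set.mem_ofPred_eq.mp hy] at h'
    exact (mul_eq_zero.mp h'.symm).resolve_left hc

/-- v₃₁₂ is an eigenvector of R₁ (eigenvalue 1) and of R₃·J (eigenvalue −iηφ̄);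
in particular both stabilize the subspace {x : ⟨x, v₃₁₂⟩ = 0}. -/
theorem v312_eigenvector (p : ℕ) (hp : 3 ≤ p) (t : ℝ) :
    (R1 p t).mulVec (v312 p t) = v312 p t ∧
    (R3 p t * Jmat).mulVec (v312 p t) = (-Complex.I * eta p * phib t) • v312 p t ∧
    (fun x => (R1 p t).mulVec x) '' {x : Fin 3 → ℂ | form p t x (v312 p t) = 0} =
      {x : Fin 3 → ℂ | form p t x (v312 p t) = 0} ∧
    (fun x => (R3 p t * Jmat).mulVec x) '' {x : Fin 3 → ℂ | form p t x (v312 p t) = 0} =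
      {x : Fin 3 → ℂ | form p t x (v312 p t) = 0} := by
  have hE := eta_mul_etab p
  have hP := phi_mul_phib t
  have hI := Complex.I_mul_I
  have hE0 : eta p ≠ 0 := Complex.exp_ne_zero _
  have hQ0 : phib t ≠ 0 := Complex.exp_ne_zero _
  obtain ⟨w, hw⟩ := form_v312 p hp t
  refine ⟨?_, ?_, ?_, ?_⟩
  · ext i
    fin_cases i <;> simp [R1, v312, Matrix.mulVec, dotProduct, Fin.sum_univ_three]
    linear_combination (-Complex.I ^ 2 * phi t * phib t) * hE
      + (Complex.I ^ 2 * (eta p ^ 2 - 1)) * hP + (eta p ^ 2 - 1) * hI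
  · rw [← Matrix.mulVec_mulVec]
    ext i
    fin_cases i <;> simp [R3, Jmat, v312, Matrix.mulVec, dotProduct, Fin.sum_univ_three]
    · linear_combination (Complex.I ^ 2 * phi t * phib t) * hE + Complex.I ^ 2 * hP + hI
    · linear_combination (Complex.I * eta p * phi t) * hE
  · refine image_ker_eq _ ?_ (fun x => form p t x (v312 p t)) 1 one_ne_zero fun x => ?_
    · simp [R1, Matrix.det_fin_three, hE0]
    · simp [hw, R1, dotProduct, Fin.sum_univ_three]
  · refine image_ker_eq _ ?_ (fun x => form p t x (v312 p t)) (-Complex.I * eta p * phib t)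
      (by simp [hE0, hQ0]) fun x => ?_
    · rw [Matrix.det_mul]
      simp [R3, Jmat, Matrix.det_fin_three, hE0]
    · simp only [hw, ← Matrix.mulVec_mulVec]
      simp [R3, Jmat, Matrix.mulVec, dotProduct, Fin.sum_univ_three]
      linear_combination (w * Complex.I ^ 2 * eta p ^ 2 * x 1) * hP
        + (w * eta p ^ 2 * x 1) * hI
end
end

section
/- For each i ∈ {1, 2, 3}, taking k ≡ i+1 (mod 3) and j ≡ i−1 (mod 3) as indices in {1,2,3}, the following matrix identities hold: Rᵢ·(J·Rᵢ·Rⱼ)·Rᵢ⁻¹ = J·Rᵢ·Rⱼ; Rⱼ·(J·Rᵢ·Rⱼ)·Rⱼ⁻¹ = J·Rₖ·Rᵢ; Rₖ·(J·Rᵢ·Rⱼ)·Rₖ⁻¹ = (J·Rᵢ·Rⱼ)·(J·Rⱼ·Rₖ)·(J·Rᵢ·Rⱼ)⁻¹; and J·(J·Rᵢ·Rⱼ)·J⁻¹ = J·Rₖ·Rᵢ. -/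
/-!
Conjugation by `J` permutes the three reflections cyclically, `J Rᵢ J⁻¹ = Rᵢ₊₁`, and any two of them
satisfy the braid relation `Rᵢ Rⱼ Rᵢ = Rⱼ Rᵢ Rⱼ`, because the product of the two off-diagonal entries
linking them is `-η² φ φ̄ = -η²`. All four identities are formal consequences of these relations
(`conj_identities_of_braid`): moving every `J` to the left and applying the braid relation turns one
side into the other.
-/

noncomputable section

open Matrix

/-- The conjugation identities for `A = Rᵢ`, `B = Rⱼ`, `C = Rₖ`, derived only from the cyclic
action of `J` and two braid relations. -/
lemma conj_identities_of_braid {A B C J : Matrix (Fin 3) (Fin 3) ℂ}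
    (hA : IsUnit A.det) (hB : IsUnit B.det) (hC : IsUnit C.det) (hJ : IsUnit J.det)
    (hAJ : A * J = J * B) (hBJ : B * J = J * C) (hCJ : C * J = J * A)
    (hAB : A * B * A = B * A * B) (hBC : B * C * B = C * B * C) :
    A * (J * A * B) * A⁻¹ = J * A * B ∧
    B * (J * A * B) * B⁻¹ = J * C * A ∧
    C * (J * A * B) * C⁻¹ = (J * A * B) * (J * B * C) * (J * A * B)⁻¹ ∧
    J * (J * A * B) * J⁻¹ = J * C * A := by
  have key : ∀ {X Y Z : Matrix (Fin 3) (Fin 3) ℂ}, IsUnit Z.det → X = Y * Z → X * Z⁻¹ = Y := by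
    rintro X Y Z hZ rfl
    exact Matrix.mul_nonsing_inv_cancel_right Z Y hZ
  have hAJ' : ∀ X, A * (J * X) = J * (B * X) := fun X => by rw [← mul_assoc, hAJ, mul_assoc]
  have hBJ' : ∀ X, B * (J * X) = J * (C * X) := fun X => by rw [← mul_assoc, hBJ, mul_assoc]
  have hCJ' : ∀ X, C * (J * X) = J * (A * X) := fun X => by rw [← mul_assoc, hCJ, mul_assoc]
  simp only [mul_assoc] at hAB hBC
  refine ⟨key hA ?_, key hB ?_, ?_, key hJ ?_⟩
  · simp only [mul_assoc, hAJ', hAB]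
  · simp only [mul_assoc, hBJ']
  · symm
    apply key (by simp only [Matrix.det_mul]; exact (hJ.mul hA).mul hB)
    -- `J A B = C J B`, so the factor `C⁻¹` cancels against `J A B`.
    have h : C⁻¹ * (J * A * B) = J * B := by
      rw [← hCJ, mul_assoc C, Matrix.nonsing_inv_mul_cancel_left C _ hC]
    rw [mul_assoc _ C⁻¹, h]
    simp only [mul_assoc, hAJ', hBJ', hCJ', hBC]
  · simp only [mul_assoc, hAJ, hCJ']

lemma eta_ne_zero (p : ℕ) : eta p ≠ 0 := Complex.exp_ne_zero _

lemma isUnit_det_R1 (p : ℕ) (t : ℝ) : IsUnit (R1 p t).det := by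
  simp [R1, Matrix.det_fin_three, eta_ne_zero]

lemma isUnit_det_R2 (p : ℕ) (t : ℝ) : IsUnit (R2 p t).det := by
  simp [R2, Matrix.det_fin_three, eta_ne_zero]

lemma isUnit_det_R3 (p : ℕ) (t : ℝ) : IsUnit (R3 p t).det := by
  simp [R3, Matrix.det_fin_three, eta_ne_zero]

lemma isUnit_det_Jmat : IsUnit Jmat.det := by
  simp [Jmat, Matrix.det_fin_three]

lemma R1_mul_Jmat (p : ℕ) (t : ℝ) : R1 p t * Jmat = Jmat * R3 p t := by
  ext i j
  fin_cases i <;> fin_cases j <;>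
    simp [R1, R3, Jmat, Matrix.mul_apply, Fin.sum_univ_three]

lemma R2_mul_Jmat (p : ℕ) (t : ℝ) : R2 p t * Jmat = Jmat * R1 p t := by
  ext i j
  fin_cases i <;> fin_cases j <;>
    simp [R2, R1, Jmat, Matrix.mul_apply, Fin.sum_univ_three]

lemma R3_mul_Jmat (p : ℕ) (t : ℝ) : R3 p t * Jmat = Jmat * R2 p t := by
  ext i j
  fin_cases i <;> fin_cases j <;>
    simp [R3, R2, Jmat, Matrix.mul_apply, Fin.sum_univ_three]

lemma braid_R1_R2 (p : ℕ) (t : ℝ) : R1 p t * R2 p t * R1 p t = R2 p t * R1 p t * R2 p t := by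
  have h := phi_mul_phib t
  have hI := Complex.I_mul_I
  ext i j
  fin_cases i <;> fin_cases j <;>
    simp [R1, R2, Matrix.mul_apply, Fin.sum_univ_three] <;> grind

lemma braid_R2_R3 (p : ℕ) (t : ℝ) : R2 p t * R3 p t * R2 p t = R3 p t * R2 p t * R3 p t := by
  have h := phi_mul_phib t
  have hI := Complex.I_mul_I
  ext i j
  fin_cases i <;> fin_cases j <;>
    simp [R2, R3, Matrix.mul_apply, Fin.sum_univ_three] <;> grind

lemma braid_R3_R1 (p : ℕ) (t : ℝ) : R3 p t * R1 p t * R3 p t = R1 p t * R3 p t * R1 p t := by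
  have h := phi_mul_phib t
  have hI := Complex.I_mul_I
  ext i j
  fin_cases i <;> fin_cases j <;>
    simp [R3, R1, Matrix.mul_apply, Fin.sum_univ_three] <;> grind

/-- Conjugation identities for the elements J·Rᵢ·Rⱼ (indices mod 3, k = i+1, j = i−1). -/
theorem conjugation_identities (p : ℕ) (hp : 3 ≤ p) (t : ℝ) :
    let R : Fin 3 → Matrix (Fin 3) (Fin 3) ℂ := ![R1 p t, R2 p t, R3 p t]
    ∀ i : Fin 3,
      let k : Fin 3 := i + 1
      let j : Fin 3 := i - 1
      R i * (Jmat * R i * R j) * (R i)⁻¹ = Jmat * R i * R j ∧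
      R j * (Jmat * R i * R j) * (R j)⁻¹ = Jmat * R k * R i ∧
      R k * (Jmat * R i * R j) * (R k)⁻¹ =
        (Jmat * R i * R j) * (Jmat * R j * R k) * (Jmat * R i * R j)⁻¹ ∧
      Jmat * (Jmat * R i * R j) * Jmat⁻¹ = Jmat * R k * R i := by
  intro R i
  fin_cases i
  · exact conj_identities_of_braid (isUnit_det_R1 p t) (isUnit_det_R3 p t) (isUnit_det_R2 p t)
      isUnit_det_Jmat (R1_mul_Jmat p t) (R3_mul_Jmat p t) (R2_mul_Jmat p t)
      (braid_R3_R1 p t).symm (braid_R2_R3 p t).symm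
  · exact conj_identities_of_braid (isUnit_det_R2 p t) (isUnit_det_R1 p t) (isUnit_det_R3 p t)
      isUnit_det_Jmat (R2_mul_Jmat p t) (R1_mul_Jmat p t) (R3_mul_Jmat p t)
      (braid_R1_R2 p t).symm (braid_R3_R1 p t).symm
  · exact conj_identities_of_braid (isUnit_det_R3 p t) (isUnit_det_R2 p t) (isUnit_det_R1 p t)
      isUnit_det_Jmat (R3_mul_Jmat p t) (R2_mul_Jmat p t) (R1_mul_Jmat p t)
      (braid_R2_R3 p t).symm (braid_R1_R2 p t).symm
end
end

section
/- For each admissible pair (p,t), the subgroup K is contained in Γ̃(p,t) and is normal in Γ̃(p,t): for every g ∈ Γ̃(p,t), g·K·g⁻¹ = K. -/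
/-!
Writing `A₁ = J R₁ R₃`, `A₂ = J R₂ R₁`, `A₃ = J R₃ R₂`, everything follows from two kinds of
relations: conjugation by `J` cycles `R₁ → R₂ → R₃ → R₁`, and the braid relations
`R₁ R₂ R₁ = R₂ R₁ R₂`, `R₁ R₃ R₁ = R₃ R₁ R₃`. Conjugation by `J` therefore cycles
`A₁ → A₂ → A₃ → A₁`, while conjugation by `R₁` acts by
`A₁ ↦ A₁`, `A₂ ↦ A₃`, `A₃ ↦ A₃ A₂ A₃⁻¹`. Both are automorphisms of `K = ⟨A₁, A₂, A₃⟩`, so the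
generators of `Γ̃` normalize `K`. This group-theoretic argument is `conj_image_closure`; the matrix
relations come down to `φ φ̄ = 1` and `i² = -1`.
-/

noncomputable section

open Matrix

/-- The admissible pairs `(p,t)`: the values for which Mostow's group Γ(p,t) is discrete. -/
def admissible (p : ℕ) (t : ℝ) : Prop :=
  (p = 3 ∧ (t = 0 ∨ t = 1/30 ∨ t = 1/18 ∨ t = 1/12 ∨ t = 5/42 ∨ t = 1/6 ∨ t = 7/30 ∨ t = 1/3)) ∨
  (p = 4 ∧ (t = 0 ∨ t = 1/12 ∨ t = 3/20 ∨ t = 1/4 ∨ t = 5/12)) ∨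
  (p = 5 ∧ (t = 1/10 ∨ t = 1/5 ∨ t = 11/30 ∨ t = 7/10))

/-- It suffices to test normalization on generators, in both directions: `g K g⁻¹ ≤ K` alone does
not give equality in an infinite group. -/
lemma mem_normalizer_closure {G : Type*} [Group G] (S : Set G) (g : G)
    (h₁ : ∀ s ∈ S, g * s * g⁻¹ ∈ Subgroup.closure S)
    (h₂ : ∀ s ∈ S, g⁻¹ * s * g ∈ Subgroup.closure S) :
    g ∈ Subgroup.normalizer (Subgroup.closure S : Set G) := by
  have key : ∀ x : G, (∀ s ∈ S, x * s * x⁻¹ ∈ Subgroup.closure S) →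
      ∀ k ∈ Subgroup.closure S, x * k * x⁻¹ ∈ Subgroup.closure S := by
    intro x hx
    have : Subgroup.closure S ≤ (Subgroup.closure S).comap (MulAut.conj x).toMonoidHom := by
      rw [Subgroup.closure_le]
      intro s hs
      simpa using hx s hs
    intro k hk
    simpa using this hk
  rw [Subgroup.mem_normalizer_iff]
  intro k
  refine ⟨key g h₁ k, fun hk => ?_⟩
  have := key g⁻¹ (by simpa using h₂) _ hk
  simpa [mul_assoc] using this

/-- The statement for an abstract group with a cyclically permuted triple `a, b, c` satisfying the
two braid relations involving `a`. -/
lemma conj_image_closure {G : Type*} [Group G] (a b c j : G)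
    (hab : j * a = b * j) (hbc : j * b = c * j) (hca : j * c = a * j)
    (br₁ : a * b * a = b * a * b) (br₂ : a * c * a = c * a * c) :
    let Γ : Subgroup G := Subgroup.closure {a, j}
    let K : Subgroup G := Subgroup.closure {j * a * c, j * b * a, j * c * b}
    K ≤ Γ ∧ ∀ g ∈ Γ, (fun k => g * k * g⁻¹) '' (K : Set G) = K := by
  intro Γ K
  have ha : a ∈ Γ := Subgroup.subset_closure (by simp)
  have hj : j ∈ Γ := Subgroup.subset_closure (by simp)
  have hb : b ∈ Γ := by
    rw [← mul_inv_eq_of_eq_mul hab]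
    exact Γ.mul_mem (Γ.mul_mem hj ha) (Γ.inv_mem hj)
  have hc : c ∈ Γ := by
    rw [← mul_inv_eq_of_eq_mul hbc]
    exact Γ.mul_mem (Γ.mul_mem hj hb) (Γ.inv_mem hj)
  have m₁ : j * a * c ∈ K := Subgroup.subset_closure (by simp)
  have m₂ : j * b * a ∈ K := Subgroup.subset_closure (by simp)
  have m₃ : j * c * b ∈ K := Subgroup.subset_closure (by simp)
  have inv_conj : ∀ {x y z : G}, x * y = z * x → x⁻¹ * z * x = y := by
    intro x y z h
    rw [mul_assoc, ← h, inv_mul_cancel_left]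
  have j₁ : j * (j * a * c) = (j * b * a) * j := by
    rw [hab, mul_assoc _ _ j, ← hca]; group
  have j₂ : j * (j * b * a) = (j * c * b) * j := by
    rw [hbc, mul_assoc _ _ j, ← hab]; group
  have j₃ : j * (j * c * b) = (j * a * c) * j := by
    rw [hca, mul_assoc _ _ j, ← hbc]; group
  have a₁ : a * (j * a * c) = (j * a * c) * a := by
    calc a * (j * a * c) = a * (j * a) * c := by group
      _ = a * b * (j * c) := by rw [hab]; group
      _ = a * b * a * j := by rw [hca]; group
      _ = b * a * (b * j) := by rw [br₁]; group
      _ = b * (a * j) * a := by rw [← hab]; group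
      _ = (b * j) * c * a := by rw [← hca]; group
      _ = (j * a * c) * a := by rw [← hab]
  have a₂ : a * (j * b * a) = (j * c * b) * a := by
    rw [hca]; group
  have comm : a * (j * b * (j * b)) = j * b * (j * b) * a := by
    calc a * (j * b * (j * b)) = a * c * (j * c) * j := by rw [hbc]; group
      _ = a * c * a * j * j := by rw [hca]; group
      _ = c * a * (c * j) * j := by rw [br₂]; group
      _ = c * a * j * (b * j) := by rw [← hbc]; group
      _ = c * (a * j) * j * a := by rw [← hab]; group
      _ = c * j * (c * j) * a := by rw [← hca]; group
      _ = j * b * (j * b) * a := by rw [← hbc]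
  -- With `A₃ = a j b` and `A₂ = j b a` this is the commutation of `a` with `(j b)²`.
  have a₃ : a * (j * c * b) * a⁻¹ = (j * c * b) * (j * b * a) * (j * c * b)⁻¹ := by
    rw [eq_mul_inv_iff_mul_eq, hca]
    calc a * (a * j * b) * a⁻¹ * (a * j * b) = a * (a * (j * b * (j * b))) := by group
      _ = a * j * b * (j * b * a) := by rw [comm]; group
  have a₃' : a⁻¹ * (j * b * a) * a = (j * b * a)⁻¹ * (j * c * b) * (j * b * a) := by
    have h : j * c * b = a * (j * b * a) * a⁻¹ := by rw [a₂]; group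
    rw [h] at a₃ ⊢
    generalize j * b * a = x at a₃ ⊢
    have h' : x * (a⁻¹ * x * a) = a * x * a⁻¹ * x := by
      calc x * (a⁻¹ * x * a)
          = a⁻¹ * (a * x * a⁻¹ * x * (a * x * a⁻¹)⁻¹) * (a * x) := by group
        _ = a⁻¹ * (a * (a * x * a⁻¹) * a⁻¹) * (a * x) := by rw [a₃]
        _ = a * x * a⁻¹ * x := by group
    calc a⁻¹ * x * a = x⁻¹ * (x * (a⁻¹ * x * a)) := by group
      _ = x⁻¹ * (a * x * a⁻¹) * x := by rw [h']; group
  have na : a ∈ Subgroup.normalizer (K : Set G) := by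
    apply mem_normalizer_closure
    · rintro s (rfl | rfl | rfl)
      · rw [a₁, mul_inv_cancel_right]; exact m₁
      · rw [a₂, mul_inv_cancel_right]; exact m₃
      · rw [a₃]; exact K.mul_mem (K.mul_mem m₃ m₂) (K.inv_mem m₃)
    · rintro s (rfl | rfl | rfl)
      · rw [inv_conj a₁]; exact m₁
      · rw [a₃']; exact K.mul_mem (K.mul_mem (K.inv_mem m₂) m₃) m₂
      · rw [inv_conj a₂]; exact m₂
  have nj : j ∈ Subgroup.normalizer (K : Set G) := by
    apply mem_normalizer_closure
    · rintro s (rfl | rfl | rfl)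
      · rw [j₁, mul_inv_cancel_right]; exact m₂
      · rw [j₂, mul_inv_cancel_right]; exact m₃
      · rw [j₃, mul_inv_cancel_right]; exact m₁
    · rintro s (rfl | rfl | rfl)
      · rw [inv_conj j₃]; exact m₃
      · rw [inv_conj j₁]; exact m₁
      · rw [inv_conj j₂]; exact m₂
  have hΓ : Γ ≤ Subgroup.normalizer (K : Set G) := by
    rw [Subgroup.closure_le]
    rintro s (rfl | rfl)
    exacts [na, nj]
  refine ⟨?_, fun g hg => ?_⟩
  · rw [Subgroup.closure_le]
    rintro s (rfl | rfl | rfl)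
    exacts [Γ.mul_mem (Γ.mul_mem hj ha) hc, Γ.mul_mem (Γ.mul_mem hj hb) ha,
      Γ.mul_mem (Γ.mul_mem hj hc) hb]
  · have hn := Subgroup.mem_normalizer_iff.1 (hΓ hg)
    ext x
    constructor
    · rintro ⟨k, hk, rfl⟩
      exact (hn k).1 hk
    · intro hx
      have hx' : g * (g⁻¹ * x * g) * g⁻¹ = x := by group
      refine ⟨g⁻¹ * x * g, (hn _).2 ?_, hx'⟩
      rw [hx']; exact hx

lemma braid_R1_R3 (p : ℕ) (t : ℝ) :
    R1 p t * R3 p t * R1 p t = R3 p t * R1 p t * R3 p t := by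
  have h := phi_mul_phib t
  have hI := Complex.I_sq
  ext i k
  fin_cases i <;> fin_cases k <;> simp [R1, R3, Matrix.mul_apply, Fin.sum_univ_three] <;> grind

lemma J_mul_R1 (p : ℕ) (t : ℝ) : Jmat * R1 p t = R2 p t * Jmat := by
  ext i k
  fin_cases i <;> fin_cases k <;> simp [R1, R2, Jmat, Matrix.mul_apply, Fin.sum_univ_three]

lemma J_mul_R2 (p : ℕ) (t : ℝ) : Jmat * R2 p t = R3 p t * Jmat := by
  ext i k
  fin_cases i <;> fin_cases k <;> simp [R2, R3, Jmat, Matrix.mul_apply, Fin.sum_univ_three]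

lemma J_mul_R3 (p : ℕ) (t : ℝ) : Jmat * R3 p t = R1 p t * Jmat := by
  ext i k
  fin_cases i <;> fin_cases k <;> simp [R1, R3, Jmat, Matrix.mul_apply, Fin.sum_univ_three]

/-- For each admissible pair (p,t), the subgroup K = ⟨J·R₁·R₃, J·R₂·R₁, J·R₃·R₂⟩ is
contained in Γ̃(p,t) = ⟨R₁, J⟩ and is normal in it: g·K·g⁻¹ = K for every g ∈ Γ̃(p,t). -/
theorem K_normal_in_Gamma (p : ℕ) (t : ℝ) (hadm : admissible p t)
    (R1' R2' R3' J' : GL (Fin 3) ℂ)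
    (hR1 : (R1' : Matrix (Fin 3) (Fin 3) ℂ) = R1 p t)
    (hR2 : (R2' : Matrix (Fin 3) (Fin 3) ℂ) = R2 p t)
    (hR3 : (R3' : Matrix (Fin 3) (Fin 3) ℂ) = R3 p t)
    (hJ : (J' : Matrix (Fin 3) (Fin 3) ℂ) = Jmat) :
    let Γ : Subgroup (GL (Fin 3) ℂ) := Subgroup.closure {R1', J'}
    let K : Subgroup (GL (Fin 3) ℂ) :=
      Subgroup.closure {J' * R1' * R3', J' * R2' * R1', J' * R3' * R2'}
    K ≤ Γ ∧ ∀ g ∈ Γ, (fun k => g * k * g⁻¹) '' (K : Set (GL (Fin 3) ℂ)) = K := by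
  apply conj_image_closure <;> apply Units.ext <;> simp only [Units.val_mul, hR1, hR2, hR3, hJ]
  exacts [J_mul_R1 p t, J_mul_R2 p t, J_mul_R3 p t, braid_R1_R2 p t, braid_R1_R3 p t]
end
end
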